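/- Assume $r > 1$ and $1 < d < q - 1$. If $F_1, \dots, F_r$ are linearly independent homogeneous polynomials of degree $d$ in $\mathbb{F}_q[x_0,\dots,x_m]$ such that $0 < \deg \gcd(F_i, F_j) < d - 1$ for some $i \ne j$, then $|V(F_1, \dots, F_r)| < (d-1)q^{m-1} + p_{m-2}$. -/

import Mathlib

open MvPolynomial

/-- `pp q k` is the number of points of `ℙ^k(F_q)`, zero for negative `k`. -/
noncomputable def pp (q : ℕ) (k : ℤ) : ℕ :=
  if k < 0 then 0 else ∑ i ∈ Finset.range (k.toNat + 1), q ^ i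

section Multiplicity

variable {K : Type*} [Field K]

/-- The substitution `f(x) ↦ f(p + T x)`; the order of `f` at `p` is the order of vanishing of the
result at `T = 0`. -/
noncomputable def dilate {σ : Type*} (p : σ → K) :
    MvPolynomial σ K →ₐ[K] Polynomial (MvPolynomial σ K) :=
  aeval fun i => Polynomial.C (C (p i)) + Polynomial.X * Polynomial.C (X i)

theorem dilate_X {σ : Type*} (p : σ → K) (i : σ) :
    dilate p (X i) = Polynomial.C (C (p i)) + Polynomial.X * Polynomial.C (X i) := by
  simp [dilate]

theorem dilate_C {σ : Type*} (p : σ → K) (a : K) :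
    dilate p (C a) = Polynomial.C (C a) := by
  simp [dilate, Polynomial.algebraMap_apply, MvPolynomial.algebraMap_eq]

theorem coeff_zero_dilate {σ : Type*} (p : σ → K) (f : MvPolynomial σ K) :
    (dilate p f).coeff 0 = C (eval p f) := by
  have h : (Polynomial.constantCoeff.comp (dilate p).toRingHom) =
      (C : K →+* MvPolynomial σ K).comp (eval p) := by
    apply MvPolynomial.ringHom_ext
    · intro a; simp
    · intro i; simp [dilate_X]
  simpa using RingHom.congr_fun h f

theorem X_dvd_dilate_iff {σ : Type*} (p : σ → K) (f : MvPolynomial σ K) :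
    Polynomial.X ∣ dilate p f ↔ eval p f = 0 := by
  rw [Polynomial.X_dvd_iff, coeff_zero_dilate, C_eq_zero]

/-- The substitution `x₀ = c`. -/
noncomputable def specialize {n : ℕ} (c : K) :
    MvPolynomial (Fin (n + 1)) K →+* MvPolynomial (Fin n) K :=
  (Polynomial.evalRingHom (C c)).comp (finSuccEquiv K n : _ →+* _)

theorem finSuccEquiv_C {n : ℕ} (a : K) :
    finSuccEquiv K n (C a) = Polynomial.C (C a) := by
  simp [finSuccEquiv_apply]

theorem specialize_C {n : ℕ} (c a : K) : specialize (n := n) c (C a) = C a := by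
  simp [specialize, finSuccEquiv_C]

theorem specialize_apply {n : ℕ} (c : K) (f : MvPolynomial (Fin (n + 1)) K) :
    specialize c f = (finSuccEquiv K n f).eval (C c) := rfl

theorem totalDegree_specialize_le {n : ℕ} (c : K) (f : MvPolynomial (Fin (n + 1)) K) :
    (specialize c f).totalDegree ≤ f.totalDegree := by
  rw [specialize_apply, Polynomial.eval_eq_sum]
  refine totalDegree_finsetSum_le fun i hi => ?_
  refine (totalDegree_mul _ _).trans ?_
  rw [← C_pow, totalDegree_C, add_zero]
  have := totalDegree_coeff_finSuccEquiv_add_le f i (Polynomial.mem_support_iff.1 hi)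
  omega

theorem dvd_of_specialize_eq_zero {n : ℕ} (c : K) (f : MvPolynomial (Fin (n + 1)) K)
    (h : specialize c f = 0) : X 0 - C c ∣ f := by
  have h' : Polynomial.X - Polynomial.C (C c) ∣ finSuccEquiv K n f :=
    Polynomial.dvd_iff_isRoot.2 h
  have e : finSuccEquiv K n (X 0 - C c) = Polynomial.X - Polynomial.C (C c) := by
    rw [map_sub, finSuccEquiv_X_zero]
    congr 1
    exact finSuccEquiv_C c
  rw [← e] at h'
  exact (map_dvd_iff (finSuccEquiv K n)).1 h'

theorem map_specialize_dilate {n : ℕ} (c : K) (p : Fin n → K) (f : MvPolynomial (Fin (n + 1)) K) :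
    (dilate (Fin.cons c p : Fin (n + 1) → K) f).map (specialize 0) =
      dilate p (specialize c f) := by
  have h : (Polynomial.mapRingHom (specialize (n := n) (0 : K))).comp
      (dilate (Fin.cons c p : Fin (n + 1) → K)).toRingHom =
      (dilate p).toRingHom.comp (specialize c) := by
    apply MvPolynomial.ringHom_ext
    · intro a; simp [specialize_C]
    · intro i
      refine Fin.cases ?_ (fun j => ?_) i
      · simp [dilate_X, specialize_apply, finSuccEquiv_X_zero, finSuccEquiv_C]
      · simp [dilate_X, specialize_C]
        simp [specialize_apply, finSuccEquiv_X_succ, dilate_X]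
  exact RingHom.congr_fun h f

theorem X_pow_dvd_of_dvd_X_mul_C {R : Type*} [CommRing R] [IsDomain R] {a : R} (ha : a ≠ 0)
    {g : Polynomial R} {s : ℕ} (h : Polynomial.X ^ s ∣ Polynomial.X * Polynomial.C a * g) :
    Polynomial.X ^ (s - 1) ∣ g := by
  rcases s with _ | s
  · simp
  · rw [pow_succ', mul_assoc] at h
    have h2 := (mul_dvd_mul_iff_left (Polynomial.X_ne_zero (R := R))).1 h
    refine Polynomial.prime_X.pow_dvd_of_dvd_mul_left s ?_ h2
    simpa [Polynomial.X_dvd_iff] using ha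

open Classical in
/-- The Schwartz–Zippel bound with multiplicities. -/
theorem card_mul_sum_order_le [Fintype K] {n : ℕ} (f : MvPolynomial (Fin n) K) (hf : f ≠ 0)
    (s : (Fin n → K) → ℕ) (hs : ∀ p, Polynomial.X ^ s p ∣ dilate p f) :
    Fintype.card K * ∑ p, s p ≤ f.totalDegree * Fintype.card K ^ n := by
  induction n with
  | zero =>
    have h0 : ∀ p, s p = 0 := by
      intro p
      by_contra h
      have h1 := (X_dvd_dilate_iff p f).1 ((dvd_pow_self _ h).trans (hs p))
      apply hf
      rw [eq_C_of_isEmpty f] at h1 ⊢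
      rw [eval_C] at h1
      rw [h1, C_0]
    simp [h0]
  | succ n ih =>
    induction hd : f.totalDegree using Nat.strong_induction_on generalizing f s with
    | _ d ihd =>
    subst hd
    have hsum : ∀ s : (Fin (n + 1) → K) → ℕ,
        ∑ p, s p = ∑ c, ∑ p : Fin n → K, s (Fin.cons c p) := by
      intro s
      rw [← Fintype.sum_prod_type']
      exact (Fintype.sum_equiv (Fin.consEquiv fun _ => K) _ _ fun x => rfl).symm
    by_cases hc : ∃ c : K, specialize c f = 0
    · obtain ⟨c, hc⟩ := hc
      obtain ⟨g, rfl⟩ := dvd_of_specialize_eq_zero c f hc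
      have hl0 : (X 0 - C c : MvPolynomial (Fin (n + 1)) K) ≠ 0 := left_ne_zero_of_mul hf
      have hg0 : g ≠ 0 := right_ne_zero_of_mul hf
      have hl : (X 0 - C c : MvPolynomial (Fin (n + 1)) K).totalDegree = 1 := by
        rw [sub_eq_add_neg, ← C_neg, totalDegree_add_eq_left_of_totalDegree_lt] <;> simp
      have hdeg : ((X 0 - C c) * g).totalDegree = 1 + g.totalDegree := by
        rw [totalDegree_mul_of_isDomain hl0 hg0, hl]
      have hdl : ∀ p : Fin (n + 1) → K, dilate p (X 0 - C c) =
          Polynomial.C (C (p 0 - c)) + Polynomial.X * Polynomial.C (X 0) := by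
        intro p
        rw [map_sub, dilate_X, dilate_C, C_sub, Polynomial.C_sub]; ring
      have key := ihd g.totalDegree (by omega) g hg0
        (fun p => s p - if p 0 = c then 1 else 0) (fun p => by
          have h := hs p
          rw [map_mul, hdl] at h
          split_ifs with hp
          · rw [hp, sub_self, C_0, Polynomial.C_0, zero_add] at h
            exact X_pow_dvd_of_dvd_X_mul_C (X_ne_zero 0) h
          · refine Polynomial.prime_X.pow_dvd_of_dvd_mul_left _ ?_ h
            rw [Polynomial.X_dvd_iff]
            simpa [sub_eq_zero] using hp) rfl
      have hle : ∑ p, s p ≤ ∑ p, (s p - if p 0 = c then 1 else 0) + Fintype.card K ^ n := by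
        calc ∑ p, s p ≤ ∑ p : Fin (n + 1) → K,
              ((s p - if p 0 = c then 1 else 0) + if p 0 = c then 1 else 0) :=
              Finset.sum_le_sum fun p _ => by omega
          _ = _ := by
              rw [Finset.sum_add_distrib]
              congr 1
              rw [hsum]
              simp
      rw [pow_succ'] at key
      rw [hdeg, add_mul, pow_succ', one_mul]
      calc _ ≤ Fintype.card K * (∑ p, (s p - if p 0 = c then 1 else 0) + Fintype.card K ^ n) :=
            Nat.mul_le_mul_left _ hle
        _ ≤ _ := by rw [mul_add]; omega
    · push Not at hc
      rw [hsum, Finset.mul_sum]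
      calc ∑ c : K, Fintype.card K * ∑ p : Fin n → K, s (Fin.cons c p)
          ≤ ∑ c : K, f.totalDegree * Fintype.card K ^ n := by
            refine Finset.sum_le_sum fun c _ => ?_
            refine (ih (specialize c f) (hc c) (fun p => s (Fin.cons c p)) fun p => ?_).trans
              (Nat.mul_le_mul_right _ (totalDegree_specialize_le c f))
            rw [← map_specialize_dilate]
            simpa using Polynomial.map_dvd (specialize (n := n) (0 : K)) (hs (Fin.cons c p))
        _ = _ := by simp [pow_succ]; ring

/-- The Schwartz–Zippel bound for the number of rational zeros. -/
theorem card_mul_card_zeros_le [Fintype K] [DecidableEq K] {n : ℕ} (f : MvPolynomial (Fin n) K)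
    (hf : f ≠ 0) : Fintype.card K * (Finset.univ.filter fun p => eval p f = 0).card ≤
      f.totalDegree * Fintype.card K ^ n := by
  rw [Finset.card_filter]
  refine card_mul_sum_order_le f hf _ fun p => ?_
  split_ifs with h
  · simpa using (X_dvd_dilate_iff p f).2 h
  · simp

end Multiplicity

section Resultant

variable {σ R : Type*} [CommRing R]

/-- The total degree of `F`, seen as a polynomial in one more variable, is at most `e`. -/
def HasWeightLE (F : Polynomial (MvPolynomial σ R)) (e : ℕ) : Prop :=
  ∀ i, F.coeff i ≠ 0 → (F.coeff i).totalDegree + i ≤ e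

theorem HasWeightLE.sub {F G : Polynomial (MvPolynomial σ R)} {e : ℕ}
    (hF : HasWeightLE F e) (hG : HasWeightLE G e) : HasWeightLE (F - G) e := by
  intro i hi
  rw [Polynomial.coeff_sub] at hi ⊢
  have := totalDegree_sub (F.coeff i) (G.coeff i)
  by_cases h1 : F.coeff i = 0
  · rw [h1, zero_sub, neg_ne_zero] at hi
    rw [h1, zero_sub, totalDegree_neg]
    exact hG i hi
  · have hF' := hF i h1
    by_cases h2 : G.coeff i = 0
    · simpa [h2] using hF'
    · have hG' := hG i h2
      omega

theorem HasWeightLE.mul {F G : Polynomial (MvPolynomial σ R)} {e f : ℕ}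
    (hF : HasWeightLE F e) (hG : HasWeightLE G f) : HasWeightLE (F * G) (e + f) := by
  intro i hi
  rw [Polynomial.coeff_mul] at hi ⊢
  have hle : i ≤ e + f := by
    obtain ⟨x, hx, hx0⟩ := Finset.exists_ne_zero_of_sum_ne_zero hi
    have h1 := hF _ (left_ne_zero_of_mul hx0)
    have h2 := hG _ (right_ne_zero_of_mul hx0)
    have := Finset.HasAntidiagonal.mem_antidiagonal.1 hx
    omega
  suffices h : (∑ x ∈ Finset.HasAntidiagonal.antidiagonal i, F.coeff x.1 * G.coeff x.2).totalDegree
      ≤ e + f - i by omega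
  refine totalDegree_finsetSum_le fun x hx => ?_
  have hx' := Finset.HasAntidiagonal.mem_antidiagonal.1 hx
  by_cases hx0 : F.coeff x.1 * G.coeff x.2 = 0
  · simp [hx0]
  · have h1 := hF _ (left_ne_zero_of_mul hx0)
    have h2 := hG _ (right_ne_zero_of_mul hx0)
    have := totalDegree_mul (F.coeff x.1) (G.coeff x.2)
    omega

theorem hasWeightLE_C_mul_X_pow (c : MvPolynomial σ R) (k : ℕ) :
    HasWeightLE (Polynomial.C c * Polynomial.X ^ k) (c.totalDegree + k) := by
  intro i hi
  rw [Polynomial.coeff_C_mul_X_pow] at hi ⊢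
  split_ifs at hi ⊢ with h
  · omega
  · exact absurd rfl hi

theorem HasWeightLE.modByMonic [Nontrivial R] {G : Polynomial (MvPolynomial σ R)} (hG : G.Monic)
    (hGw : HasWeightLE G G.natDegree) {F : Polynomial (MvPolynomial σ R)} {e : ℕ}
    (hF : HasWeightLE F e) : HasWeightLE (F %ₘ G) e := by
  induction hd : F.degree using WellFoundedLT.induction generalizing F with
  | _ d ih =>
  subst hd
  by_cases h : F.degree < G.degree
  · rwa [(Polynomial.modByMonic_eq_self_iff hG).2 h]
  · by_cases hF0 : F = 0
    · rwa [hF0, Polynomial.zero_modByMonic, ← hF0]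
    have hlt := Polynomial.div_wf_lemma ⟨not_lt.1 h, hF0⟩ hG
    have hdeg : G.natDegree ≤ F.natDegree := Polynomial.natDegree_le_natDegree (not_lt.1 h)
    have hlead := hF F.natDegree (by simpa using hF0)
    have hw := hF.sub (G := G * (Polynomial.C F.leadingCoeff *
      Polynomial.X ^ (F.natDegree - G.natDegree))) (by
        have := hGw.mul (hasWeightLE_C_mul_X_pow F.leadingCoeff (F.natDegree - G.natDegree))
        intro i hi
        have := this i hi
        simp only [Polynomial.coeff_natDegree] at hlead
        omega)
    have := ih _ hlt hw rfl
    rwa [Polynomial.sub_modByMonic, mul_comm G, Polynomial.mul_self_modByMonic hG,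
      sub_zero] at this

theorem totalDegree_det_le {a b : ℕ} (M : Matrix (Fin a) (Fin a) (MvPolynomial σ R))
    (hM : ∀ i j, M i j ≠ 0 → (M i j).totalDegree + i ≤ b + j) :
    M.det.totalDegree ≤ a * b := by
  rw [Matrix.det_apply]
  refine totalDegree_finsetSum_le fun τ _ => ?_
  refine (totalDegree_smul_le _ _).trans ?_
  by_cases h : ∏ i, M (τ i) i = 0
  · simp [h]
  · have hne : ∀ i, M (τ i) i ≠ 0 := fun i hi => h (Finset.prod_eq_zero (Finset.mem_univ i) hi)
    refine (totalDegree_finsetProd _ _).trans ?_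
    have h1 : ∑ i, ((M (τ i) i).totalDegree + (τ i : ℕ)) ≤ ∑ i : Fin a, (b + (i : ℕ)) :=
      Finset.sum_le_sum fun i _ => hM _ _ (hne i)
    rw [Finset.sum_add_distrib, Finset.sum_add_distrib,
      Equiv.sum_comp τ (fun i => (i : ℕ))] at h1
    simpa using h1

theorem pow_card_dvd_det {ι S : Type*} [Fintype ι] [DecidableEq ι] [CommRing S] (x : S)
    (M : Matrix ι ι S) (s : Finset ι) (h : ∀ i ∈ s, ∀ j, x ∣ M i j) : x ^ s.card ∣ M.det := by
  rw [← Matrix.det_transpose, Matrix.det_apply']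
  refine Finset.dvd_sum fun τ _ => Dvd.dvd.mul_left ?_ _
  rw [← Finset.prod_const]
  refine (Finset.prod_dvd_prod_of_dvd _ _ fun i hi => ?_).trans
    (Finset.prod_dvd_prod_of_subset s _ _ (Finset.subset_univ s))
  exact h i hi _

/-- The matrix of multiplication by `H` modulo the monic polynomial `G`. -/
noncomputable def mulModMatrix {A : Type*} [CommRing A] (G H : Polynomial A) :
    Matrix (Fin G.natDegree) (Fin G.natDegree) A :=
  Matrix.of fun i j => ((H * Polynomial.X ^ (j : ℕ)) %ₘ G).coeff i

/-- The determinant of multiplication by `H` modulo `G`, that is, the resultant of `G` and `H`,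
is nonzero when they are coprime. -/
theorem det_mulModMatrix_ne_zero {A : Type*} [CommRing A] [IsDomain A]
    [UniqueFactorizationMonoid A] {G H : Polynomial A} (hG : G.Monic) (hGH : IsRelPrime G H) :
    (mulModMatrix G H).det ≠ 0 := by
  intro h0
  obtain ⟨v, hv0, hv⟩ := Matrix.exists_mulVec_eq_zero_iff.2 h0
  set u : Polynomial A := ∑ j, Polynomial.C (v j) * Polynomial.X ^ (j : ℕ) with hu
  have hcoeff : ∀ j : Fin G.natDegree, u.coeff j = v j := by
    intro j
    simp [hu, Polynomial.finsetSum_coeff, Polynomial.coeff_X_pow, Fin.val_inj]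
  have hdeg : u.degree < G.degree := by
    rw [Polynomial.degree_eq_natDegree hG.ne_zero]
    refine (Polynomial.degree_sum_le _ _).trans_lt ?_
    rw [Finset.sup_lt_iff (WithBot.bot_lt_coe _)]
    intro j _
    exact (Polynomial.degree_C_mul_X_pow_le _ _).trans_lt (by exact_mod_cast j.2)
  have hmod : (H * u) %ₘ G = 0 := by
    have e : (H * u) %ₘ G =
        ∑ j : Fin G.natDegree, v j • ((H * Polynomial.X ^ (j : ℕ)) %ₘ G) := by
      have := map_sum (Polynomial.modByMonicHom G)
        (fun j : Fin G.natDegree => v j • (H * Polynomial.X ^ (j : ℕ))) Finset.univ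
      simp only [map_smul, Polynomial.modByMonicHom_apply] at this
      rw [← this, hu, Finset.mul_sum]
      congr 1
      refine Finset.sum_congr rfl fun j _ => ?_
      rw [Polynomial.smul_eq_C_mul]; ring
    ext i
    by_cases hi : i < G.natDegree
    · have := congr_fun hv ⟨i, hi⟩
      rw [e]
      simpa [Matrix.mulVec, dotProduct, mulModMatrix, Polynomial.finsetSum_coeff,
        mul_comm] using this
    · refine Polynomial.coeff_eq_zero_of_degree_lt
        ((Polynomial.degree_modByMonic_lt _ hG).trans_le ?_)
      exact Polynomial.degree_le_natDegree.trans (by exact_mod_cast not_lt.1 hi)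
  have hdvd := hGH.dvd_of_dvd_mul_left ((Polynomial.modByMonic_eq_zero_iff_dvd hG).1 hmod)
  have hu0 : u = 0 := by
    by_contra h
    exact hG.not_dvd_of_degree_lt h hdeg hdvd
  apply hv0
  ext j
  rw [← hcoeff, hu0]; simp

end Resultant

section CommonZeros

variable {K : Type*} [Field K]

open Classical in
/-- The resultant of `G` and `H` vanishes at `p` to order at least the number of common zeros
of `G` and `H` over `p`. -/
theorem X_pow_card_dvd_dilate_det [Fintype K] {n : ℕ}
    {G H : Polynomial (MvPolynomial (Fin n) K)}
    (hG : G.Monic) (hcard : G.natDegree ≤ Fintype.card K) (p : Fin n → K) :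
    Polynomial.X ^ (Finset.univ.filter fun y : K =>
      (G.map (eval p)).eval y = 0 ∧ (H.map (eval p)).eval y = 0).card ∣
      dilate p (mulModMatrix G H).det := by
  set Y := Finset.univ.filter fun y : K =>
      (G.map (eval p)).eval y = 0 ∧ (H.map (eval p)).eval y = 0 with hY
  have hYa : Y.card ≤ G.natDegree := by
    have hm : (G.map (eval p)).Monic := hG.map _
    calc Y.card ≤ (G.map (eval p)).roots.toFinset.card := Finset.card_le_card fun y hy => by
            simp only [hY, Finset.mem_filter] at hy
            simpa [hm.ne_zero] using hy.2.1
      _ ≤ _ := (Multiset.toFinset_card_le _).trans (Polynomial.card_roots' _)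
      _ = _ := hG.natDegree_map _
  obtain ⟨T, hYT, hT⟩ := Finset.exists_superset_card_eq hYa (by simpa using hcard)
  let v : Fin G.natDegree → K := fun i => ((T.equivFinOfCardEq hT).symm i : K)
  have hv : Function.Injective v := Subtype.val_injective.comp (Equiv.injective _)
  have hYv : (Finset.univ.filter fun i => v i ∈ Y).card = Y.card := by
    rw [← Finset.card_image_of_injective _ hv]
    congr 1
    ext y
    simp only [Finset.mem_image, Finset.mem_filter, Finset.mem_univ, true_and]
    constructor
    · rintro ⟨i, hi, rfl⟩; exact hi
    · intro hy
      refine ⟨T.equivFinOfCardEq hT ⟨y, hYT hy⟩, ?_⟩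
      simp [v, hy]
  let ι : K →+* Polynomial (MvPolynomial (Fin n) K) := Polynomial.C.comp C
  have hW : Matrix.det (Matrix.vandermonde v) ≠ 0 := Matrix.det_vandermonde_ne_zero_iff.2 hv
  have hdvd : Polynomial.X ^ Y.card ∣ (ι.mapMatrix (Matrix.vandermonde v) *
      (dilate p).toRingHom.mapMatrix (mulModMatrix G H)).det := by
    rw [← hYv]
    refine pow_card_dvd_det _ _ _ fun i hi j => ?_
    obtain ⟨h1, h2⟩ : (G.map (eval p)).eval (v i) = 0 ∧ (H.map (eval p)).eval (v i) = 0 := by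
      simpa [hY] using hi
    have hG1 : G ≠ 1 := by
      rintro rfl
      exact absurd j.2 (by simp)
    have hlt := Polynomial.natDegree_modByMonic_lt (H * Polynomial.X ^ (j : ℕ)) hG hG1
    have hz : (((H * Polynomial.X ^ (j : ℕ)) %ₘ G).map (eval p)).eval (v i) = 0 := by
      rw [Polynomial.modByMonic_eq_sub_mul_div]
      simp [h1, h2]
    rw [Polynomial.eval_eq_sum_range' (lt_of_le_of_lt Polynomial.natDegree_map_le hlt),
      Finset.sum_range] at hz
    rw [Polynomial.X_dvd_iff, Matrix.mul_apply, Polynomial.finsetSum_coeff]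
    have hcoe : ∀ l : Fin G.natDegree, (ι.mapMatrix (Matrix.vandermonde v) i l *
        (dilate p).toRingHom.mapMatrix (mulModMatrix G H) l j).coeff 0 =
        C ((((H * Polynomial.X ^ (j : ℕ)) %ₘ G).map (eval p)).coeff l * v i ^ (l : ℕ)) := by
      intro l
      simp [ι, mulModMatrix, Matrix.vandermonde_apply, Polynomial.mul_coeff_zero,
        coeff_zero_dilate, mul_comm]
      rw [← Polynomial.C_pow, Polynomial.coeff_C_zero]
      exact Or.inl rfl
    rw [Finset.sum_congr rfl fun l _ => hcoe l, ← map_sum, hz, C_0]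
  rw [Matrix.det_mul, ← RingHom.map_det, ← RingHom.map_det] at hdvd
  refine Polynomial.prime_X.pow_dvd_of_dvd_mul_left _ ?_ hdvd
  rw [Polynomial.X_dvd_iff]
  simpa [ι] using hW

open Classical in
/-- Bézout's bound for the number of rational points on a complete intersection of codimension
two, one of the equations being monic in one variable. -/
theorem card_mul_sum_common_zeros_le [Fintype K] {n a b : ℕ}
    {G H : Polynomial (MvPolynomial (Fin n) K)} (hG : G.Monic) (hGa : G.natDegree = a)
    (hcard : a ≤ Fintype.card K) (hGw : HasWeightLE G a) (hHw : HasWeightLE H b)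
    (hGH : IsRelPrime G H) :
    Fintype.card K * ∑ p : Fin n → K, (Finset.univ.filter fun y : K =>
      (G.map (eval p)).eval y = 0 ∧ (H.map (eval p)).eval y = 0).card ≤
      a * b * Fintype.card K ^ n := by
  subst hGa
  refine (card_mul_sum_order_le _ (det_mulModMatrix_ne_zero hG hGH) _
    fun p => X_pow_card_dvd_dilate_det hG hcard p).trans (Nat.mul_le_mul_right _ ?_)
  refine totalDegree_det_le _ fun i j hij => ?_
  have hX : HasWeightLE (Polynomial.X ^ (j : ℕ) : Polynomial (MvPolynomial (Fin n) K)) j := by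
    simpa using hasWeightLE_C_mul_X_pow (1 : MvPolynomial (Fin n) K) j
  exact HasWeightLE.modByMonic hG hGw (hHw.mul hX) i hij

end CommonZeros

section Homogeneous

variable {K : Type*} [Field K]

/-- The homogeneous components of `f` are the coefficients of `f(T x)`. -/
theorem coeff_dilate_zero {σ : Type*} (f : MvPolynomial σ K) (i : ℕ) :
    (dilate 0 f).coeff i = homogeneousComponent i f := by
  induction f using MvPolynomial.induction_on' with
  | monomial u a =>
    have h1 : dilate 0 (monomial u a) =
        Polynomial.C (monomial u a) * Polynomial.X ^ u.degree := by
      rw [monomial_eq, map_mul, dilate_C, Finsupp.prod, map_prod]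
      simp only [map_pow, dilate_X, Pi.zero_apply, C_0, Polynomial.C_0, zero_add, mul_pow,
        Finset.prod_mul_distrib, Finset.prod_pow_eq_pow_sum]
      simp only [Finsupp.degree_apply, map_mul, map_prod, map_pow]
      ring
    rw [h1, Polynomial.coeff_C_mul_X_pow,
      homogeneousComponent_of_mem (isHomogeneous_monomial a rfl : IsHomogeneous _ u.degree)]
  | add p q hp hq => simp [hp, hq]

/-- A factor of a nonzero homogeneous polynomial is homogeneous. -/
theorem MvPolynomial.IsHomogeneous.exists_of_mul_left {σ : Type*} {f g : MvPolynomial σ K} {n : ℕ}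
    (h : (f * g).IsHomogeneous n) (h0 : f * g ≠ 0) : ∃ a, f.IsHomogeneous a := by
  have hprod : dilate 0 f * dilate 0 g = Polynomial.C (f * g) * Polynomial.X ^ n := by
    ext1 i
    rw [← map_mul, coeff_dilate_zero, homogeneousComponent_of_mem h,
      Polynomial.coeff_C_mul_X_pow]
  have hne : dilate 0 f * dilate 0 g ≠ 0 := by
    rw [hprod]
    exact mul_ne_zero (by simpa using h0) (pow_ne_zero _ Polynomial.X_ne_zero)
  have hP := left_ne_zero_of_mul hne
  have hQ := right_ne_zero_of_mul hne
  have h1 : (dilate 0 f).natDegree + (dilate 0 g).natDegree = n := by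
    rw [← Polynomial.natDegree_mul hP hQ, hprod, Polynomial.natDegree_C_mul_X_pow _ _ h0]
  have h2 : (dilate 0 f).natTrailingDegree + (dilate 0 g).natTrailingDegree = n := by
    rw [← Polynomial.natTrailingDegree_mul hP hQ, hprod,
      Polynomial.natTrailingDegree_mul_X_pow (by simpa using h0), Polynomial.natTrailingDegree_C,
      zero_add]
  have h3 := Polynomial.natTrailingDegree_le_natDegree (dilate 0 f)
  have h4 := Polynomial.natTrailingDegree_le_natDegree (dilate 0 g)
  refine ⟨(dilate 0 f).natDegree, ?_⟩
  have hcomp : homogeneousComponent (dilate 0 f).natDegree f = f := by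
    conv_rhs => rw [← sum_homogeneousComponent f]
    by_cases hmem : (dilate 0 f).natDegree ∈ Finset.range (f.totalDegree + 1)
    · rw [Finset.sum_eq_single_of_mem _ hmem]
      intro i _ hi
      rw [← coeff_dilate_zero]
      rcases lt_or_gt_of_ne hi with hi | hi
      · exact Polynomial.coeff_eq_zero_of_lt_natTrailingDegree (by omega)
      · exact Polynomial.coeff_eq_zero_of_natDegree_lt hi
    · exfalso
      have h5 : (dilate 0 f).coeff (dilate 0 f).natDegree ≠ 0 := by simpa using hP
      rw [coeff_dilate_zero, homogeneousComponent_eq_zero] at h5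
      · exact h5 rfl
      · simp at hmem; omega
  have := homogeneousComponent_isHomogeneous (dilate 0 f).natDegree f
  rwa [hcomp] at this

theorem MvPolynomial.IsHomogeneous.eval_smul {σ : Type*} {f : MvPolynomial σ K} {n : ℕ}
    (h : f.IsHomogeneous n) (c : K) (z : σ → K) : eval (c • z) f = c ^ n * eval z f := by
  rw [eval_eq, eval_eq, Finset.mul_sum]
  refine Finset.sum_congr rfl fun s hs => ?_
  rw [h.degree_eq_sum_deg_support hs]
  simp only [Pi.smul_apply, smul_eq_mul, mul_pow, Finset.prod_mul_distrib,
    Finset.prod_pow_eq_pow_sum]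
  ring

theorem MvPolynomial.IsHomogeneous.eval_zero_eq {σ : Type*} {f : MvPolynomial σ K} {n : ℕ}
    (h : f.IsHomogeneous n) (hn : n ≠ 0) : eval 0 f = 0 := by
  simpa [hn] using h.eval_smul 0 0

/-- The change of coordinates `xᵢ ↦ xᵢ + wᵢ x₀`. -/
noncomputable def shearHom {n : ℕ} (w : Fin (n + 1) → K) :
    MvPolynomial (Fin (n + 1)) K →ₐ[K] MvPolynomial (Fin (n + 1)) K :=
  aeval fun i => X i + C (w i) * X 0

theorem shearHom_comp_neg {n : ℕ} (w : Fin (n + 1) → K) (hw : w 0 = 0) :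
    (shearHom w).comp (shearHom (-w)) = AlgHom.id K _ := by
  apply MvPolynomial.algHom_ext
  intro i
  simp [shearHom, hw]

/-- The change of coordinates `xᵢ ↦ xᵢ + wᵢ x₀` as an automorphism, when `w₀ = 0`. -/
noncomputable def shear {n : ℕ} (w : Fin (n + 1) → K) (hw : w 0 = 0) :
    MvPolynomial (Fin (n + 1)) K ≃ₐ[K] MvPolynomial (Fin (n + 1)) K :=
  AlgEquiv.ofAlgHom (shearHom w) (shearHom (-w)) (shearHom_comp_neg w hw)
    (by simpa using shearHom_comp_neg (-w) (by simpa using hw))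

theorem eval_shear {n : ℕ} (w : Fin (n + 1) → K) (hw : w 0 = 0) (f : MvPolynomial (Fin (n + 1)) K)
    (z : Fin (n + 1) → K) : eval z (shear w hw f) = eval (z + z 0 • w) f := by
  have h : (eval z).comp (shearHom w).toRingHom = eval (z + z 0 • w) := by
    apply MvPolynomial.ringHom_ext
    · intro a; simp [shearHom]
    · intro i; simp [shearHom, mul_comm]
  exact RingHom.congr_fun h f

theorem MvPolynomial.IsHomogeneous.shear {n d : ℕ} {w : Fin (n + 1) → K} (hw : w 0 = 0)
    {f : MvPolynomial (Fin (n + 1)) K} (h : f.IsHomogeneous d) :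
    (_root_.shear w hw f).IsHomogeneous d := by
  have := h.aeval (fun i => X i + C (w i) * X 0 : Fin (n + 1) → MvPolynomial (Fin (n + 1)) K)
    (n := 1) fun i => (isHomogeneous_X _ _).add (isHomogeneous_C_mul_X _ _)
  rwa [one_mul] at this

theorem exists_coeff_finSuccEquiv_eq_C {n a : ℕ} {f : MvPolynomial (Fin (n + 1)) K}
    (hf : f.IsHomogeneous a) (he : eval (Fin.cons 1 0 : Fin (n + 1) → K) f ≠ 0) :
    ∃ c : K, c ≠ 0 ∧ (finSuccEquiv K n f).coeff a = C c := by
  have h0 := hf.finSuccEquiv_coeff_isHomogeneous a 0 (add_zero a)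
  have hC := totalDegree_eq_zero_iff_eq_C.1 (Nat.le_zero.1 h0.totalDegree_le)
  refine ⟨_, fun hc => he ?_, hC⟩
  rw [hc, C_0] at hC
  rw [eval_eq_eval_mv_eval']
  suffices h : (finSuccEquiv K n f).map (eval 0) = 0 by rw [h, Polynomial.eval_zero]
  ext i
  rw [Polynomial.coeff_map, Polynomial.coeff_zero]
  rcases lt_trichotomy i a with hi | rfl | hi
  · exact (hf.finSuccEquiv_coeff_isHomogeneous i (a - i) (by omega)).eval_zero_eq (by omega)
  · rw [hC, map_zero]
  · by_contra h
    have h1 : (finSuccEquiv K n f).coeff i ≠ 0 := fun h1 => h (by rw [h1, map_zero])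
    have := totalDegree_coeff_finSuccEquiv_add_le f i h1
    have := hf.totalDegree_le
    omega

open Classical in
/-- Bézout's bound for the number of rational points of the affine cone over a complete
intersection of codimension two. -/
theorem card_mul_card_common_zeros_le [Fintype K] {n a b : ℕ}
    {G H : MvPolynomial (Fin (n + 1)) K} (hG : G.IsHomogeneous a) (hH : H.IsHomogeneous b)
    (hG0 : G ≠ 0) (ha : a < Fintype.card K) (hGH : IsRelPrime G H) :
    Fintype.card K * (Finset.univ.filter fun z : Fin (n + 1) → K =>
      eval z G = 0 ∧ eval z H = 0).card ≤ a * b * Fintype.card K ^ n := by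
  obtain ⟨v, hv⟩ : ∃ v, eval v (X 0 * G) ≠ 0 := by
    by_contra! h
    have := ((isHomogeneous_X K (0 : Fin (n + 1))).mul hG).eq_zero_of_forall_eval_eq_zero_of_le_card
      h (by rw [Cardinal.mk_fintype]; exact_mod_cast (by omega : 1 + a ≤ Fintype.card K))
    exact mul_ne_zero (X_ne_zero 0) hG0 this
  rw [map_mul, eval_X] at hv
  have hv0 : v 0 ≠ 0 := left_ne_zero_of_mul hv
  let w : Fin (n + 1) → K := fun i => if i = 0 then 0 else (v 0)⁻¹ * v i
  have hw : w 0 = 0 := if_pos rfl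
  have hcons : (Fin.cons 1 0 + (1 : K) • w : Fin (n + 1) → K) = (v 0)⁻¹ • v := by
    ext i
    refine Fin.cases ?_ (fun j => ?_) i
    · simp [w, hv0]
    · simp [w, Fin.succ_ne_zero]
  have hGs := hG.shear hw
  have hHs := hH.shear hw
  obtain ⟨c, hc, hcoeff⟩ := exists_coeff_finSuccEquiv_eq_C hGs (by
    rw [eval_shear, Fin.cons_zero, hcons, hG.eval_smul]
    exact mul_ne_zero (pow_ne_zero _ (inv_ne_zero hv0)) (right_ne_zero_of_mul hv))
  have hweight : ∀ {f : MvPolynomial (Fin (n + 1)) K} {d : ℕ}, f.IsHomogeneous d →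
      HasWeightLE (finSuccEquiv K n f) d := fun hf i hi =>
    (totalDegree_coeff_finSuccEquiv_add_le _ i hi).trans hf.totalDegree_le
  set G' := C c⁻¹ * shear w hw G with hG'
  have hG's : G'.IsHomogeneous a := hGs.C_mul _
  have hunit : IsUnit (C c⁻¹ : MvPolynomial (Fin (n + 1)) K) :=
    (IsUnit.mk0 _ (inv_ne_zero hc)).map C
  have hcoeff' : (finSuccEquiv K n G').coeff a = 1 := by
    rw [hG', map_mul, finSuccEquiv_C, Polynomial.coeff_C_mul, hcoeff, ← C_mul,
      inv_mul_cancel₀ hc, C_1]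
  have hnat : (finSuccEquiv K n G').natDegree ≤ a := by
    rw [natDegree_finSuccEquiv]
    exact (degreeOf_le_totalDegree _ _).trans hG's.totalDegree_le
  have hmonic := Polynomial.monic_of_natDegree_le_of_coeff_eq_one a hnat hcoeff'
  have hnat' : (finSuccEquiv K n G').natDegree = a :=
    le_antisymm hnat (Polynomial.le_natDegree_of_ne_zero (by rw [hcoeff']; exact one_ne_zero))
  have hrel : IsRelPrime (finSuccEquiv K n G') (finSuccEquiv K n (shear w hw H)) := by
    intro E h1 h2
    obtain ⟨E, rfl⟩ := ((shear w hw).trans (finSuccEquiv K n)).surjective E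
    rw [AlgEquiv.trans_apply, map_dvd_iff] at h1 h2
    rw [hG', hunit.dvd_mul_left, map_dvd_iff] at h1
    rw [map_dvd_iff] at h2
    exact (hGH h1 h2).map _
  have key := card_mul_sum_common_zeros_le hmonic hnat' ha.le (hweight hG's) (hweight hHs) hrel
  refine (Nat.mul_le_mul_left _ ?_).trans key
  rw [← Finset.card_sigma]
  let φ : (Σ _ : Fin n → K, K) → Fin (n + 1) → K := fun x =>
    (Fin.cons x.2 x.1 : Fin (n + 1) → K) + x.2 • w
  refine (Finset.card_le_card fun z hz => ?_).trans (Finset.card_image_le (f := φ))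
  rw [Finset.mem_filter] at hz
  rw [Finset.mem_image]
  have hz' : z - z 0 • w + (z - z 0 • w) 0 • w = z := by simp [hw]
  refine ⟨⟨Fin.tail (z - z 0 • w), (z - z 0 • w) 0⟩, ?_, ?_⟩
  · simp only [Finset.mem_sigma, Finset.mem_univ, Finset.mem_filter, true_and]
    rw [← eval_eq_eval_mv_eval', ← eval_eq_eval_mv_eval', Fin.cons_self_tail, hG', map_mul,
      eval_shear, eval_shear, hz', hz.2.1, hz.2.2]
    simp
  · simp only [φ]
    rw [Fin.cons_self_tail, hz']

end Homogeneous

section Projective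

variable {K : Type*} [Field K] [Fintype K]

open Classical in
/-- The punctured affine cone over a projective set has `q - 1` points over each point. -/
theorem card_sub_one_mul_ncard_add_one_le {n : ℕ} (S : Set (Projectivization K (Fin n → K)))
    (U : Finset (Fin n → K)) (h0 : 0 ∈ U) (hU : ∀ x ∈ S, ∀ c : K, c • x.rep ∈ U) :
    (Fintype.card K - 1) * S.ncard + 1 ≤ U.card := by
  have hfin : S.Finite := Set.toFinite S
  rw [← Finset.card_erase_add_one h0, Set.ncard_eq_toFinset_card S hfin, ← Fintype.card_units,
    ← Finset.card_univ, ← Finset.card_product]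
  refine Nat.add_le_add_right (Finset.card_le_card_of_injOn (fun x => (x.1 : K) • x.2.rep) ?_ ?_) 1
  · rintro ⟨u, x⟩ hx
    have hx' : x ∈ S := by simpa using hx
    exact Finset.mem_coe.2 (Finset.mem_erase.2
      ⟨smul_ne_zero u.ne_zero x.rep_nonzero, hU x hx' u⟩)
  · rintro ⟨u, x⟩ - ⟨v, y⟩ - h
    have h' : u • x.rep = v • y.rep := h
    have hxy : x = y := by
      rw [← x.mk_rep, ← y.mk_rep, Projectivization.mk_eq_mk_iff]
      exact ⟨u⁻¹ * v, by rw [mul_smul, ← h', inv_smul_smul]⟩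
    subst hxy
    have : (u : K) = v := smul_left_injective K x.rep_nonzero h
    rw [Units.ext this]

open Classical in
/-- A bound for the number of projective points on `V(D G, D H)`, obtained by counting affine points
on `V(D)` and on the complete intersection `V(G, H)`. -/
theorem sub_one_mul_ncard_common_zeros_add_two_le {k e δ : ℕ}
    {D G H : MvPolynomial (Fin (k + 1 + 1)) K} (hD : D.IsHomogeneous e) (hG : G.IsHomogeneous δ)
    (hH : H.IsHomogeneous δ) (he : e ≠ 0) (hδ : δ ≠ 0) (hD0 : D ≠ 0) (hG0 : G ≠ 0)
    (hlt : δ < Fintype.card K) (hGH : IsRelPrime G H) :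
    (Fintype.card K - 1) * Set.ncard {x : Projectivization K (Fin (k + 1 + 1) → K) |
      eval x.rep (D * G) = 0 ∧ eval x.rep (D * H) = 0} + 2 ≤
      e * Fintype.card K * Fintype.card K ^ k + δ * δ * Fintype.card K ^ k := by
  set A := Finset.univ.filter fun z : Fin (k + 1 + 1) → K => eval z D = 0
  set B := Finset.univ.filter fun z : Fin (k + 1 + 1) → K => eval z G = 0 ∧ eval z H = 0
  have hpos : 0 < Fintype.card K := Fintype.card_pos
  have hA : A.card ≤ e * Fintype.card K * Fintype.card K ^ k := by
    refine Nat.le_of_mul_le_mul_left ((card_mul_card_zeros_le D hD0).trans ?_) hpos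
    refine (Nat.mul_le_mul_right _ hD.totalDegree_le).trans (le_of_eq ?_)
    ring
  have hB : B.card ≤ δ * δ * Fintype.card K ^ k := by
    refine Nat.le_of_mul_le_mul_left
      ((card_mul_card_common_zeros_le hG hH hG0 hlt hGH).trans (le_of_eq ?_)) hpos
    ring
  have h0A : (0 : Fin (k + 1 + 1) → K) ∈ A := by
    simpa [A] using hD.eval_zero_eq he
  have h0B : (0 : Fin (k + 1 + 1) → K) ∈ B := by
    simpa [B] using And.intro (hG.eval_zero_eq hδ) (hH.eval_zero_eq hδ)
  have hAB : 1 ≤ (A ∩ B).card := Finset.card_pos.2 ⟨0, Finset.mem_inter.2 ⟨h0A, h0B⟩⟩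
  have hcard := Finset.card_union_add_card_inter A B
  have hS := card_sub_one_mul_ncard_add_one_le {x : Projectivization K (Fin (k + 1 + 1) → K) |
      eval x.rep (D * G) = 0 ∧ eval x.rep (D * H) = 0} (A ∪ B) (Finset.mem_union_left _ h0A) (by
    rintro x ⟨h1, h2⟩ c
    rw [map_mul, mul_eq_zero] at h1 h2
    simp only [A, B, Finset.mem_union, Finset.mem_filter, Finset.mem_univ, true_and,
      hD.eval_smul, hG.eval_smul, hH.eval_smul, mul_eq_zero]
    tauto)
  omega

end Projective

section Arithmetic

theorem sub_one_mul_pp_add_one {q : ℕ} (hq : 1 ≤ q) (k : ℕ) :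
    (q - 1) * pp q ((k + 1 : ℕ) - 2 : ℤ) + 1 = q ^ k := by
  cases k with
  | zero => simp [pp]
  | succ k =>
    have h : (((k + 1 + 1 : ℕ) : ℤ) - 2) = k := by push_cast; ring
    obtain ⟨q, rfl⟩ : ∃ x, q = x + 1 := ⟨q - 1, by omega⟩
    rw [h, pp, if_neg (by omega), Int.toNat_natCast, Nat.add_sub_cancel, mul_comm,
      geom_sum_mul_add]

theorem lt_sub_one_mul_add_of_sub_one_mul_add_two_le {q e δ Q s p : ℕ} (he : 0 < e)
    (hδ : 2 ≤ δ) (hq : e + δ < q - 1)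
    (hp : (q - 1) * p + 1 = Q) (hs : (q - 1) * s + 2 ≤ e * q * Q + δ * δ * Q) :
    s < (e + δ - 1) * Q + p := by
  obtain ⟨t, rfl⟩ : ∃ t, q = e + δ + 2 + t := ⟨q - (e + δ + 2), by omega⟩
  obtain ⟨δ, rfl⟩ : ∃ k, δ = k + 2 := ⟨δ - 2, by omega⟩
  by_contra! h
  simp only [show e + (δ + 2) + 2 + t - 1 = e + δ + 3 + t by omega,
    show e + (δ + 2) - 1 = e + δ + 1 by omega] at *
  have h1 := Nat.mul_le_mul_left (e + δ + 3 + t) h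
  have h2 : (e * (e + (δ + 2) + 2 + t) + (δ + 2) * (δ + 2)) * Q
      ≤ ((e + δ + 3 + t) * (e + δ + 1) + 1) * Q :=
    Nat.mul_le_mul_right _ (by ring_nf; nlinarith)
  nlinarith

end Arithmetic

/-- Low correlation, case 2: if `r > 1`, `1 < d < q-1`, and `F₁,…,F_r` are linearly
independent homogeneous polynomials of degree `d` in `F_q[x₀,…,x_m]` such that for
some `i ≠ j` the gcd of `Fᵢ, Fⱼ` has degree strictly between `0` and `d-1`, then
`|V(F₁,…,F_r)| < (d-1)q^(m-1) + p_(m-2)`. -/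
theorem low_correlation_case2 (q d m r : ℕ) {K : Type} [Field K] [Fintype K]
    (hq : Fintype.card K = q) (hm : 1 ≤ m) (hr : 1 < r) (hd : 1 < d) (hdq : d < q - 1)
    (Fs : Fin r → MvPolynomial (Fin (m + 1)) K)
    (hli : LinearIndependent K Fs) (hhom : ∀ i, (Fs i).IsHomogeneous d)
    (hmid : ∃ i j, i ≠ j ∧ ∃ D : MvPolynomial (Fin (m + 1)) K,
      0 < D.totalDegree ∧ D.totalDegree < d - 1 ∧ D ∣ Fs i ∧ D ∣ Fs j ∧
      ∀ E : MvPolynomial (Fin (m + 1)) K, E ∣ Fs i → E ∣ Fs j → E ∣ D) :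
    Set.ncard {x : Projectivization K (Fin (m + 1) → K) | ∀ i, eval x.rep (Fs i) = 0}
      < (d - 1) * q ^ (m - 1) + pp q ((m : ℤ) - 2) := by
  obtain ⟨i, j, -, D, hD1, hD2, ⟨G, hG⟩, ⟨H, hH⟩, hgcd⟩ := hmid
  subst hq
  obtain ⟨k, rfl⟩ : ∃ k, m = k + 1 := ⟨m - 1, by omega⟩
  have hi0 : D * G ≠ 0 := hG ▸ hli.ne_zero i
  have hj0 : D * H ≠ 0 := hH ▸ hli.ne_zero j
  have hD0 : D ≠ 0 := left_ne_zero_of_mul hi0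
  have hG0 : G ≠ 0 := right_ne_zero_of_mul hi0
  have hi : (D * G).IsHomogeneous d := hG ▸ hhom i
  have hj : (D * H).IsHomogeneous d := hH ▸ hhom j
  obtain ⟨e, hDe⟩ := hi.exists_of_mul_left hi0
  obtain ⟨δ, hGδ⟩ := (mul_comm D G ▸ hi).exists_of_mul_left (mul_comm D G ▸ hi0)
  obtain ⟨δ', hHδ⟩ := (mul_comm D H ▸ hj).exists_of_mul_left (mul_comm D H ▸ hj0)
  have hsum : e + δ = d := (hDe.mul hGδ).inj_right hi hi0
  have hsum' : e + δ' = d := (hDe.mul hHδ).inj_right hj hj0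
  obtain rfl : δ' = δ := by omega
  rw [hDe.totalDegree hD0] at hD1 hD2
  have hrel : IsRelPrime G H := by
    intro E h1 h2
    obtain ⟨c, hc⟩ := hgcd (D * E) (hG ▸ mul_dvd_mul_left D h1) (hH ▸ mul_dvd_mul_left D h2)
    rw [mul_assoc, left_eq_mul₀ hD0] at hc
    exact IsUnit.of_mul_eq_one c hc
  have hcount := sub_one_mul_ncard_common_zeros_add_two_le hDe hGδ hHδ (by omega) (by omega)
    hD0 hG0 (by omega) hrel
  have hbound := lt_sub_one_mul_add_of_sub_one_mul_add_two_le hD1 (by omega) (by omega)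
    (sub_one_mul_pp_add_one (by omega : 1 ≤ Fintype.card K) k) hcount
  rw [hsum] at hbound
  refine (Set.ncard_le_ncard (fun x hx => ?_) (Set.toFinite _)).trans_lt hbound
  exact ⟨hG ▸ hx i, hH ▸ hx j⟩
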